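/- arXiv:math/0511281 — 2 statements merged into one kernel-verified Lean document; each statement's English description precedes it below -/
import Mathlib

section
/- In the subcritical case the trapping term for the potential is negative far from the photon sphere: there exists ρ₀ > 0 such that for every r > r₊ with |r⋆(r)| > ρ₀, one has 2V(r) + r⋆(r)·F(r)·(dV/dr)(r) < 0. -/
/-!
Since `V = F F' / r`, the trapping term factors as `F · (2 F' / r + r⋆ V')`, and `F > 0` in the
exterior, so only the sign of the second factor matters. It tends to `-∞` at the horizon, where
`r⋆ → -∞` while `V'(r₊) = F'(r₊)² / r₊ > 0` by subcriticality. At infinity `r⋆ ~ r`,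
`F' ~ 2M / r²` and `V' ~ -6M / r⁴`, so `r³` times this factor tends to `4M - 6M = -2M < 0`.
On the compact region between these two ends the continuous function `r⋆` is bounded.
-/

open Filter Topology Set

theorem exists_pos_forall_norm_gt_imp {α E : Type*} [LinearOrder α] [TopologicalSpace α]
    [OrderTopology α] [CompactIccSpace α] [NoMaxOrder α] [SeminormedAddCommGroup E]
    {f : α → E} {p : α → Prop} {a : α} (hf : ContinuousOn f (Ioi a))
    (ha : ∀ᶠ x in 𝓝[>] a, p x) (htop : ∀ᶠ x in atTop, p x) :
    ∃ ρ > 0, ∀ x, a < x → ρ < ‖f x‖ → p x := by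
  have : Nonempty α := ⟨a⟩
  obtain ⟨b, hab, hb⟩ := mem_nhdsGT_iff_exists_Ioo_subset.mp ha
  obtain ⟨c, hc⟩ := eventually_atTop.mp htop
  obtain ⟨ρ, hρ⟩ := (isCompact_Icc (a := b) (b := c)).exists_bound_of_continuousOn
    (hf.mono fun x hx => lt_of_lt_of_le hab hx.1)
  refine ⟨max ρ 1, by positivity, fun x hax hx => ?_⟩
  by_contra hpx
  have hbx : b ≤ x := not_lt.mp fun hxb => hpx (hb ⟨hax, hxb⟩)
  have hxc : x ≤ c := le_of_not_ge fun hcx => hpx (hc x hcx)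
  exact absurd (hρ x ⟨hbx, hxc⟩) ((le_max_left ρ 1).trans_lt hx).not_ge

theorem tendsto_log_sub_div_div_self_atTop (a : ℝ) {m : ℝ} (hm : 0 < m) :
    Tendsto (fun r => Real.log ((r - a) / m) / r) atTop (𝓝 0) := by
  have harg : Tendsto (fun r => (r - a) / m) atTop atTop :=
    (tendsto_atTop_add_const_right _ (-a) tendsto_id).atTop_div_const hm
  refine ((Real.tendsto_pow_log_div_mul_add_atTop m a 1 hm.ne').comp harg).congr fun r => ?_
  simp only [Function.comp_apply, pow_one, mul_div_cancel₀ _ hm.ne', sub_add_cancel]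

theorem tendsto_log_sub_div_nhdsGT (a : ℝ) {m : ℝ} (hm : 0 < m) :
    Tendsto (fun r => Real.log ((r - a) / m)) (𝓝[>] a) atBot := by
  have hcont : Continuous fun r : ℝ => (r - a) / m := by fun_prop
  refine Real.tendsto_log_nhdsGT_zero.comp (tendsto_nhdsWithin_iff.mpr ⟨?_, ?_⟩)
  · exact (hcont.tendsto' a 0 (by simp)).mono_left nhdsWithin_le_nhds
  · filter_upwards [self_mem_nhdsWithin] with r hr
    exact div_pos (sub_pos.mpr hr) hm

namespace ReissnerNordstrom

/-- The radius `r₊` of the event horizon of the black hole of mass `M` and charge `Q`. -/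
noncomputable def outerHorizon (M Q : ℝ) : ℝ := M + Real.sqrt (M ^ 2 - Q ^ 2)

/-- The radius `r₋` of the Cauchy horizon of the black hole of mass `M` and charge `Q`. -/
noncomputable def innerHorizon (M Q : ℝ) : ℝ := M - Real.sqrt (M ^ 2 - Q ^ 2)

/-- The blackening factor `F` of the metric `-F dt² + F⁻¹ dr² + r² dω²`. -/
noncomputable def blackening (M Q r : ℝ) : ℝ := 1 - 2 * M / r + Q ^ 2 / r ^ 2

/-- The derivative `F'` of the blackening factor, given by its closed form. -/
noncomputable def blackeningDeriv (M Q r : ℝ) : ℝ := 2 * M / r ^ 2 - 2 * Q ^ 2 / r ^ 3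

/-- The potential `V = F F' / r` of the wave equation in the tortoise coordinate. -/
noncomputable def potential (M Q r : ℝ) : ℝ := r⁻¹ * blackening M Q r * blackeningDeriv M Q r

/-- The derivative `dV/dr = -2 r⁻⁷ P_Q(r)` of the potential, given by its closed form. -/
noncomputable def potentialDeriv (M Q r : ℝ) : ℝ :=
  -2 / r ^ 7 *
    (3 * M * r ^ 3 - 4 * (Q ^ 2 + 2 * M ^ 2) * r ^ 2 + 15 * M * Q ^ 2 * r - 6 * Q ^ 4)

/-- The tortoise coordinate `r⋆`, the primitive of `1 / F` on the exterior `r > r₊` that is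
normalised by the additive constant `C`. -/
noncomputable def tortoise (M Q C r : ℝ) : ℝ :=
  r + outerHorizon M Q ^ 2 / (outerHorizon M Q - innerHorizon M Q) *
      Real.log ((r - outerHorizon M Q) / M)
    - innerHorizon M Q ^ 2 / (outerHorizon M Q - innerHorizon M Q) *
      Real.log ((r - innerHorizon M Q) / M) + C

/-- The cofactor `2 F' / r + r⋆ V'` of `F` in the trapping term `2 V + r⋆ F V'`. -/
noncomputable def trappingCofactor (M Q C r : ℝ) : ℝ :=
  2 * (r⁻¹ * blackeningDeriv M Q r) + tortoise M Q C r * potentialDeriv M Q r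

variable {M Q r : ℝ}

theorem two_mul_potential_add_tortoise_mul (C : ℝ) :
    2 * potential M Q r + tortoise M Q C r * blackening M Q r * potentialDeriv M Q r =
      blackening M Q r * trappingCofactor M Q C r := by
  unfold potential trappingCofactor
  ring

theorem outerHorizon_add_innerHorizon : outerHorizon M Q + innerHorizon M Q = 2 * M := by
  unfold outerHorizon innerHorizon
  ring

theorem outerHorizon_mul_innerHorizon (hQ : Q ^ 2 ≤ M ^ 2) :
    outerHorizon M Q * innerHorizon M Q = Q ^ 2 := by
  have hsq : Real.sqrt (M ^ 2 - Q ^ 2) ^ 2 = M ^ 2 - Q ^ 2 := Real.sq_sqrt (sub_nonneg.mpr hQ)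
  unfold outerHorizon innerHorizon
  linear_combination -hsq

theorem innerHorizon_le_outerHorizon : innerHorizon M Q ≤ outerHorizon M Q := by
  have hsqrt : 0 ≤ Real.sqrt (M ^ 2 - Q ^ 2) := Real.sqrt_nonneg _
  unfold outerHorizon innerHorizon
  linarith

theorem innerHorizon_lt_outerHorizon (hQ : Q ^ 2 < M ^ 2) :
    innerHorizon M Q < outerHorizon M Q := by
  have hsqrt : 0 < Real.sqrt (M ^ 2 - Q ^ 2) := Real.sqrt_pos.mpr (sub_pos.mpr hQ)
  unfold outerHorizon innerHorizon
  linarith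

theorem outerHorizon_pos (hM : 0 < M) : 0 < outerHorizon M Q :=
  add_pos_of_pos_of_nonneg hM (Real.sqrt_nonneg _)

theorem blackening_eq_mul_div (hQ : Q ^ 2 ≤ M ^ 2) (hr : r ≠ 0) :
    blackening M Q r = (r - outerHorizon M Q) * (r - innerHorizon M Q) / r ^ 2 := by
  unfold blackening
  field_simp
  linear_combination
    r * outerHorizon_add_innerHorizon (M := M) (Q := Q) - outerHorizon_mul_innerHorizon hQ

theorem blackening_pos (hM : 0 < M) (hQ : Q ^ 2 < M ^ 2) (hr : outerHorizon M Q < r) :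
    0 < blackening M Q r := by
  have hr₀ : 0 < r := (outerHorizon_pos hM).trans hr
  have hinner : innerHorizon M Q < r := (innerHorizon_lt_outerHorizon hQ).trans hr
  rw [blackening_eq_mul_div hQ.le hr₀.ne']
  exact div_pos (mul_pos (sub_pos.mpr hr) (sub_pos.mpr hinner)) (pow_pos hr₀ 2)

theorem continuousAt_blackeningDeriv (hr : r ≠ 0) : ContinuousAt (blackeningDeriv M Q) r := by
  unfold blackeningDeriv
  fun_prop (disch := positivity)

theorem continuousAt_potentialDeriv (hr : r ≠ 0) : ContinuousAt (potentialDeriv M Q) r := by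
  unfold potentialDeriv
  fun_prop (disch := positivity)

theorem blackeningDeriv_outerHorizon (hM : 0 < M) (hQ : Q ^ 2 ≤ M ^ 2) :
    blackeningDeriv M Q (outerHorizon M Q) =
      (outerHorizon M Q - innerHorizon M Q) / outerHorizon M Q ^ 2 := by
  have hpos : 0 < outerHorizon M Q := outerHorizon_pos hM
  unfold blackeningDeriv
  field_simp
  linear_combination 2 * outerHorizon_mul_innerHorizon hQ
    - outerHorizon M Q * outerHorizon_add_innerHorizon (M := M) (Q := Q)

theorem potentialDeriv_outerHorizon (hM : 0 < M) (hQ : Q ^ 2 ≤ M ^ 2) :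
    potentialDeriv M Q (outerHorizon M Q) =
      blackeningDeriv M Q (outerHorizon M Q) ^ 2 / outerHorizon M Q := by
  have hpos : 0 < outerHorizon M Q := outerHorizon_pos hM
  have hmass : M = (outerHorizon M Q + innerHorizon M Q) / 2 := by
    rw [outerHorizon_add_innerHorizon, mul_div_cancel_left₀ M two_ne_zero]
  have hcharge : Q ^ 2 = outerHorizon M Q * innerHorizon M Q :=
    (outerHorizon_mul_innerHorizon hQ).symm
  have hcharge_four : Q ^ 4 = (outerHorizon M Q * innerHorizon M Q) ^ 2 := by
    rw [← hcharge, ← pow_mul]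
  rw [blackeningDeriv_outerHorizon hM hQ, potentialDeriv, hcharge_four, hcharge]
  generalize outerHorizon M Q = a at *
  generalize innerHorizon M Q = b at *
  rw [hmass]
  field_simp
  ring

theorem potentialDeriv_outerHorizon_pos (hM : 0 < M) (hQ : Q ^ 2 < M ^ 2) :
    0 < potentialDeriv M Q (outerHorizon M Q) := by
  have hpos : 0 < outerHorizon M Q := outerHorizon_pos hM
  have hgap : 0 < outerHorizon M Q - innerHorizon M Q :=
    sub_pos.mpr (innerHorizon_lt_outerHorizon hQ)
  rw [potentialDeriv_outerHorizon hM hQ.le, blackeningDeriv_outerHorizon hM hQ.le]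
  positivity

theorem tendsto_sq_mul_blackeningDeriv_atTop :
    Tendsto (fun r => r ^ 2 * blackeningDeriv M Q r) atTop (𝓝 (2 * M)) := by
  have hcont : Continuous fun x : ℝ => 2 * M - 2 * Q ^ 2 * x := by fun_prop
  refine ((hcont.tendsto' 0 (2 * M) (by simp)).comp tendsto_inv_atTop_zero).congr' ?_
  filter_upwards [eventually_ne_atTop 0] with r hr
  simp only [Function.comp_apply, blackeningDeriv]
  field_simp

theorem tendsto_pow_four_mul_potentialDeriv_atTop :
    Tendsto (fun r => r ^ 4 * potentialDeriv M Q r) atTop (𝓝 (-6 * M)) := by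
  have hcont : Continuous fun x : ℝ => -6 * M + 8 * (Q ^ 2 + 2 * M ^ 2) * x
      - 30 * M * Q ^ 2 * x ^ 2 + 12 * Q ^ 4 * x ^ 3 := by fun_prop
  refine ((hcont.tendsto' 0 (-6 * M) (by simp)).comp tendsto_inv_atTop_zero).congr' ?_
  filter_upwards [eventually_ne_atTop 0] with r hr
  simp only [Function.comp_apply, potentialDeriv]
  field_simp
  ring

theorem continuousOn_tortoise (hM : M ≠ 0) (C : ℝ) :
    ContinuousOn (tortoise M Q C) (Ioi (outerHorizon M Q)) := by
  intro r hr
  have houter : (r - outerHorizon M Q) / M ≠ 0 := div_ne_zero (sub_pos.mpr hr).ne' hM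
  have hinner : (r - innerHorizon M Q) / M ≠ 0 :=
    div_ne_zero (sub_pos.mpr (innerHorizon_le_outerHorizon.trans_lt hr)).ne' hM
  unfold tortoise
  exact ContinuousAt.continuousWithinAt (by fun_prop (disch := assumption))

theorem tendsto_tortoise_outerHorizon (hM : 0 < M) (hQ : Q ^ 2 < M ^ 2) (C : ℝ) :
    Tendsto (tortoise M Q C) (𝓝[>] outerHorizon M Q) atBot := by
  have hgap : 0 < outerHorizon M Q - innerHorizon M Q :=
    sub_pos.mpr (innerHorizon_lt_outerHorizon hQ)
  have hcoeff : 0 < outerHorizon M Q ^ 2 / (outerHorizon M Q - innerHorizon M Q) :=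
    div_pos (pow_pos (outerHorizon_pos hM) 2) hgap
  have hregular : ContinuousAt (fun r =>
      r - innerHorizon M Q ^ 2 / (outerHorizon M Q - innerHorizon M Q) *
        Real.log ((r - innerHorizon M Q) / M) + C) (outerHorizon M Q) := by
    have harg : (outerHorizon M Q - innerHorizon M Q) / M ≠ 0 := (div_pos hgap hM).ne'
    fun_prop (disch := assumption)
  have hsingular := (tendsto_log_sub_div_nhdsGT (outerHorizon M Q) hM).const_mul_atBot hcoeff
  refine ((hregular.tendsto.mono_left nhdsWithin_le_nhds).add_atBot hsingular).congr fun r => ?_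
  unfold tortoise
  ring

theorem tendsto_tortoise_div_self_atTop (hM : 0 < M) (C : ℝ) :
    Tendsto (fun r => tortoise M Q C r / r) atTop (𝓝 1) := by
  have houter := (tendsto_log_sub_div_div_self_atTop (outerHorizon M Q) hM).const_mul
    (outerHorizon M Q ^ 2 / (outerHorizon M Q - innerHorizon M Q))
  have hinner := (tendsto_log_sub_div_div_self_atTop (innerHorizon M Q) hM).const_mul
    (innerHorizon M Q ^ 2 / (outerHorizon M Q - innerHorizon M Q))
  have hconst : Tendsto (fun r : ℝ => C / r) atTop (𝓝 0) := tendsto_const_nhds.div_atTop tendsto_id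
  have hsum := ((houter.const_add 1).sub hinner).add hconst
  simp only [mul_zero, add_zero, sub_zero] at hsum
  refine hsum.congr' ?_
  filter_upwards [eventually_ne_atTop 0] with r hr
  unfold tortoise
  field_simp

theorem tendsto_trappingCofactor_outerHorizon (hM : 0 < M) (hQ : Q ^ 2 < M ^ 2) (C : ℝ) :
    Tendsto (trappingCofactor M Q C) (𝓝[>] outerHorizon M Q) atBot := by
  have hne : outerHorizon M Q ≠ 0 := (outerHorizon_pos hM).ne'
  have hfirst := (((continuousAt_inv₀ hne).mul
    (continuousAt_blackeningDeriv (M := M) (Q := Q) hne)).const_mul 2).tendsto.mono_left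
      (nhdsWithin_le_nhds (s := Ioi (outerHorizon M Q)))
  have hderiv := (continuousAt_potentialDeriv (M := M) (Q := Q) hne).tendsto.mono_left
    (nhdsWithin_le_nhds (s := Ioi (outerHorizon M Q)))
  exact hfirst.add_atBot ((tendsto_tortoise_outerHorizon hM hQ C).atBot_mul_pos
    (potentialDeriv_outerHorizon_pos hM hQ) hderiv)

theorem tendsto_pow_three_mul_trappingCofactor_atTop (hM : 0 < M) (C : ℝ) :
    Tendsto (fun r => r ^ 3 * trappingCofactor M Q C r) atTop (𝓝 (-2 * M)) := by
  have hlim := (tendsto_sq_mul_blackeningDeriv_atTop (M := M) (Q := Q)).const_mul 2 |>.add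
    ((tendsto_tortoise_div_self_atTop (Q := Q) hM C).mul
      (tendsto_pow_four_mul_potentialDeriv_atTop (M := M) (Q := Q)))
  rw [show 2 * (2 * M) + 1 * (-6 * M) = -2 * M by ring] at hlim
  refine hlim.congr' ?_
  filter_upwards [eventually_ne_atTop 0] with r hr
  unfold trappingCofactor
  field_simp

theorem eventually_trappingCofactor_neg_atTop (hM : 0 < M) (C : ℝ) :
    ∀ᶠ r in atTop, trappingCofactor M Q C r < 0 := by
  have hneg : -2 * M < 0 := by linarith
  filter_upwards [(tendsto_pow_three_mul_trappingCofactor_atTop hM C).eventually_lt_const hneg,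
    eventually_gt_atTop 0] with r hlt hr
  exact neg_of_mul_neg_right hlt (pow_pos hr 3).le

end ReissnerNordstrom

open ReissnerNordstrom

/-- Subcritical Reissner–Nordström: the trapping term for the potential is negative far
from the photon sphere: there is `ρ₀ > 0` so that `2V + r⋆·F·(dV/dr) < 0` whenever
`r > r₊` and `|r⋆(r)| > ρ₀`. -/
theorem stmt10 (M Q : ℝ) (hM : 0 < M) (hQ : Q^2 < M^2) (Cstar : ℝ)
    (rp rm : ℝ) (hrp : rp = M + Real.sqrt (M^2 - Q^2)) (hrm : rm = M - Real.sqrt (M^2 - Q^2))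
    (F V rstar PQ dVdr : ℝ → ℝ)
    (hF : ∀ r, F r = 1 - 2*M/r + Q^2/r^2)
    (hV : ∀ r, V r = r⁻¹ * F r * (2*M/r^2 - 2*Q^2/r^3))
    (hrstar : ∀ r, rstar r = r + rp^2/(rp - rm) * Real.log ((r - rp)/M)
        - rm^2/(rp - rm) * Real.log ((r - rm)/M) + Cstar)
    (hPQ : ∀ r, PQ r = 3*M*r^3 - 4*(Q^2 + 2*M^2)*r^2 + 15*M*Q^2*r - 6*Q^4)
    (hdV : ∀ r, dVdr r = -2/r^7 * PQ r) :
    ∃ ρ₀ > 0, ∀ r, rp < r → ρ₀ < |rstar r| →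
      2 * V r + rstar r * F r * dVdr r < 0 := by
  obtain rfl : rp = outerHorizon M Q := hrp
  obtain rfl : rm = innerHorizon M Q := hrm
  obtain rfl : rstar = tortoise M Q Cstar := funext hrstar
  obtain rfl : F = blackening M Q := funext hF
  obtain rfl : V = potential M Q := funext hV
  obtain rfl : PQ = _ := funext hPQ
  obtain rfl : dVdr = potentialDeriv M Q := funext hdV
  obtain ⟨ρ₀, hρ₀, hneg⟩ := exists_pos_forall_norm_gt_imp
    (continuousOn_tortoise hM.ne' Cstar)
    ((tendsto_trappingCofactor_outerHorizon hM hQ Cstar).eventually_lt_atBot 0)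
    (eventually_trappingCofactor_neg_atTop hM Cstar)
  refine ⟨ρ₀, hρ₀, fun r hr hlt => ?_⟩
  rw [two_mul_potential_add_tortoise_mul]
  exact mul_neg_of_pos_of_neg (blackening_pos hM hQ hr) (hneg r hr hlt)
end

section
/- Fix M > 0, Q ∈ ℝ with Q² < M², and c ≥ 0 (for the wave equation on the l-th spherical harmonic one takes c = l(l+1)). Let V_c(r) = V(r) + c·V_L(r) on (r₊, ∞). Then V_c has a unique critical point in the exterior region, and it is a maximum: there is a unique r₀ ∈ (r₊, ∞) with (dV_c/dr)(r₀) = 0 (equivalently, a unique root of P_Q + c·P_L in (r₊, ∞)); moreover V_c is strictly increasing on (r₊, r₀] and strictly decreasing on [r₀, ∞). -/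
/-!
The derivative of `V + c V_L` is `-2 r⁻⁷ (P_Q + c P_L)`, so everything hinges on the sign of the
polynomial `P_Q + c P_L` beyond the horizon. Expanded in powers of `r - r₊`, its coefficients change
sign exactly once. By the elementary case of Descartes' rule of signs it is then negative up to a
single root `r₀ > r₊` and positive afterwards: if the change occurs at degree `k`, dividing by
`(r - r₊) ^ k` makes every monomial nondecreasing.
-/

open Set Filter Topology

section SignChange

open Polynomial

/-- Coefficients change sign exactly once, from negative to positive as the degree grows; zero
coefficients are ignored, and the one of the cut-off degree `k` may have either sign. This is the
hypothesis of the one-variation case of Descartes' rule of signs. -/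
def HasOneSignChange (p : ℝ[X]) : Prop :=
  (∃ k, (∀ i < k, p.coeff i ≤ 0) ∧ ∀ i > k, 0 ≤ p.coeff i) ∧
    (∃ i, p.coeff i < 0) ∧ ∃ j, 0 < p.coeff j

theorem pow_mul_pow_lt_pow_mul_pow {x y : ℝ} (hx : 0 < x) (hxy : x < y) {i k : ℕ} (hik : i < k) :
    y ^ i * x ^ k < x ^ i * y ^ k := by
  obtain ⟨d, rfl⟩ := Nat.exists_eq_add_of_lt hik
  have hy : 0 < y := hx.trans hxy
  calc y ^ i * x ^ (i + d + 1) = (x * y) ^ i * x ^ (d + 1) := by ring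
    _ < (x * y) ^ i * y ^ (d + 1) := by gcongr
    _ = x ^ i * y ^ (i + d + 1) := by ring

theorem HasOneSignChange.exists_eval_mul_pow_lt {p : ℝ[X]} (hp : HasOneSignChange p) :
    ∃ k : ℕ, ∀ ⦃x y : ℝ⦄, 0 < x → x < y → p.eval x * y ^ k < p.eval y * x ^ k := by
  obtain ⟨⟨k, hlow, hhigh⟩, ⟨i, hi⟩, j, hj⟩ := hp
  refine ⟨k, fun x y hx hxy ↦ ?_⟩
  have term_le (n : ℕ) : p.coeff n * (x ^ n * y ^ k) ≤ p.coeff n * (y ^ n * x ^ k) := by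
    rcases lt_trichotomy n k with hn | rfl | hn
    · exact mul_le_mul_of_nonpos_left (pow_mul_pow_lt_pow_mul_pow hx hxy hn).le (hlow n hn)
    · rw [mul_comm (x ^ n)]
    · refine mul_le_mul_of_nonneg_left ?_ (hhigh n hn)
      linarith [pow_mul_pow_lt_pow_mul_pow hx hxy hn]
  have exists_term_lt : ∃ n ∈ Finset.range (p.natDegree + 1),
      p.coeff n * (x ^ n * y ^ k) < p.coeff n * (y ^ n * x ^ k) := by
    have mem_range {n : ℕ} (hn : p.coeff n ≠ 0) : n ∈ Finset.range (p.natDegree + 1) :=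
      Finset.mem_range_succ_iff.2 (le_natDegree_of_ne_zero hn)
    rcases lt_or_ge i k with hik | hki
    · exact ⟨i, mem_range hi.ne,
        mul_lt_mul_of_neg_left (pow_mul_pow_lt_pow_mul_pow hx hxy hik) hi⟩
    · have hik : i = k := hki.antisymm' (not_lt.1 fun h ↦ (hhigh i h).not_gt hi)
      have hkj : k < j := by
        refine lt_of_le_of_ne (not_lt.1 fun h ↦ (hlow j h).not_gt hj) ?_
        rintro rfl
        exact hj.not_gt (hik ▸ hi)
      refine ⟨j, mem_range hj.ne', mul_lt_mul_of_pos_left ?_ hj⟩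
      linarith [pow_mul_pow_lt_pow_mul_pow hx hxy hkj]
  simpa only [eval_eq_sum_range, Finset.sum_mul, mul_assoc] using
    Finset.sum_lt_sum (fun n _ ↦ term_le n) exists_term_lt

theorem HasOneSignChange.leadingCoeff_pos {p : ℝ[X]} (hp : HasOneSignChange p) :
    0 < p.leadingCoeff := by
  obtain ⟨⟨k, hlow, hhigh⟩, -, j, hj⟩ := hp
  have hkj : k ≤ j := not_lt.1 fun h ↦ (hlow j h).not_gt hj
  rcases (le_natDegree_of_ne_zero hj.ne').eq_or_lt with hjn | hjn
  · rwa [leadingCoeff, ← hjn]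
  · have hp0 : p ≠ 0 := by rintro rfl; simp at hj
    exact (hhigh _ (hkj.trans_lt hjn)).lt_of_ne' (leadingCoeff_ne_zero.2 hp0)

theorem HasOneSignChange.trailingCoeff_neg {p : ℝ[X]} (hp : HasOneSignChange p) :
    p.trailingCoeff < 0 := by
  obtain ⟨⟨k, hlow, hhigh⟩, ⟨i, hi⟩, -⟩ := hp
  have hik : i ≤ k := not_lt.1 fun h ↦ (hhigh i h).not_gt hi
  rcases (natTrailingDegree_le_of_ne_zero hi.ne).eq_or_lt with hni | hni
  · rwa [trailingCoeff, hni]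
  · have hp0 : p ≠ 0 := by rintro rfl; simp at hi
    exact (hlow _ (hni.trans_le hik)).lt_of_ne (mt trailingCoeff_eq_zero.1 hp0)

theorem HasOneSignChange.degree_pos {p : ℝ[X]} (hp : HasOneSignChange p) : 0 < p.degree := by
  refine natDegree_pos_iff_degree_pos.1 (Nat.pos_of_ne_zero fun h ↦ ?_)
  have htrail : p.trailingCoeff = p.leadingCoeff := by
    have h' : p.natTrailingDegree = 0 := Nat.le_zero.1 (h ▸ p.natTrailingDegree_le_natDegree)
    rw [trailingCoeff, leadingCoeff, h, h']
  exact hp.trailingCoeff_neg.not_gt (htrail ▸ hp.leadingCoeff_pos)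

theorem eventually_eval_neg_of_trailingCoeff_neg {p : ℝ[X]} (hp : p.trailingCoeff < 0) :
    ∀ᶠ x in 𝓝[>] 0, p.eval x < 0 := by
  set n := p.natTrailingDegree with hn
  obtain ⟨q, hq⟩ : X ^ n ∣ p :=
    X_pow_dvd_iff.2 fun _ ↦ coeff_eq_zero_of_lt_natTrailingDegree
  have hq0 : q.eval 0 < 0 := by
    have hcoeff : p.coeff n = q.coeff 0 := by
      simpa only [← hq, zero_add] using coeff_X_pow_mul q n 0
    rwa [← coeff_zero_eq_eval_zero, ← hcoeff, hn]
  have hq_near : ∀ᶠ x in 𝓝[>] 0, q.eval x < 0 :=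
    (q.continuousAt.eventually_lt_const hq0).filter_mono nhdsWithin_le_nhds
  filter_upwards [hq_near, self_mem_nhdsWithin] with x hqx hx
  rw [hq, eval_mul, eval_pow, eval_X]
  exact mul_neg_of_pos_of_neg (pow_pos hx _) hqx

theorem HasOneSignChange.exists_pos_root {p : ℝ[X]} (hp : HasOneSignChange p) :
    ∃ x > 0, p.eval x = 0 := by
  obtain ⟨a, ha_neg, ha⟩ :=
    ((eventually_eval_neg_of_trailingCoeff_neg hp.trailingCoeff_neg).and
      self_mem_nhdsWithin).exists
  obtain ⟨b, hb_pos, hab⟩ :=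
    (((p.tendsto_atTop_of_leadingCoeff_nonneg hp.degree_pos
      hp.leadingCoeff_pos.le).eventually_gt_atTop 0).and (eventually_ge_atTop a)).exists
  obtain ⟨x, hx, hx0⟩ :=
    intermediate_value_Icc hab p.continuousOn ⟨ha_neg.le, hb_pos.le⟩
  exact ⟨x, (mem_Ioi.1 ha).trans_le hx.1, hx0⟩

theorem HasOneSignChange.exists_pos_root_eval_neg_eval_pos {p : ℝ[X]} (hp : HasOneSignChange p) :
    ∃ x₀ > 0, p.eval x₀ = 0 ∧ (∀ x ∈ Ioo 0 x₀, p.eval x < 0) ∧ ∀ x > x₀, 0 < p.eval x := by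
  obtain ⟨x₀, hx₀, hroot⟩ := hp.exists_pos_root
  obtain ⟨k, hk⟩ := hp.exists_eval_mul_pow_lt
  refine ⟨x₀, hx₀, hroot, fun x hx ↦ ?_, fun x hx ↦ ?_⟩
  · have h := hk hx.1 hx.2
    rw [hroot, zero_mul] at h
    exact neg_of_mul_neg_left h (pow_pos hx₀ k).le
  · have h := hk hx₀ hx
    rw [hroot, zero_mul] at h
    exact pos_of_mul_pos_left h (pow_pos hx₀ k).le

theorem hasOneSignChange_quartic {a₀ a₁ a₂ a₃ a₄ : ℝ} (h₀ : a₀ ≤ 0) (h₁₂ : a₁ ≤ 0 ∨ 0 ≤ a₂)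
    (h₃ : 0 < a₃) (h₄ : 0 ≤ a₄) (hneg : a₀ < 0 ∨ a₁ < 0 ∨ a₂ < 0) :
    HasOneSignChange (C a₀ + C a₁ * X + C a₂ * X ^ 2 + C a₃ * X ^ 3 + C a₄ * X ^ 4) := by
  set p := C a₀ + C a₁ * X + C a₂ * X ^ 2 + C a₃ * X ^ 3 + C a₄ * X ^ 4 with hp
  have coeff_zero : p.coeff 0 = a₀ := by simp [hp]
  have coeff_one : p.coeff 1 = a₁ := by simp [hp, coeff_C]
  have coeff_two : p.coeff 2 = a₂ := by simp [hp]
  have coeff_three : p.coeff 3 = a₃ := by simp [hp]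
  have coeff_nonneg : ∀ i > 2, 0 ≤ p.coeff i
    | 3, _ => coeff_three ▸ h₃.le
    | 4, _ => by simpa [hp, coeff_X] using h₄
    | n + 5, _ => by simp [hp]
  refine ⟨?_, ?_, 3, coeff_three ▸ h₃⟩
  · rcases h₁₂ with h₁ | h₂
    · refine ⟨2, fun i hi ↦ ?_, coeff_nonneg⟩
      interval_cases i
      exacts [coeff_zero ▸ h₀, coeff_one ▸ h₁]
    · refine ⟨1, fun i hi ↦ ?_, fun i hi ↦ ?_⟩
      · rwa [Nat.lt_one_iff.1 hi, coeff_zero]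
      · rcases (Nat.succ_le_of_lt hi).eq_or_lt with rfl | hi
        exacts [coeff_two ▸ h₂, coeff_nonneg i hi]
  · rcases hneg with h | h | h
    exacts [⟨0, coeff_zero ▸ h⟩, ⟨1, coeff_one ▸ h⟩, ⟨2, coeff_two ▸ h⟩]

end SignChange

namespace ReissnerNordstrom

variable {M Q c r s : ℝ}

/-- The metric function `F` of the Reissner–Nordström solution of mass `M` and charge `Q`. -/
noncomputable def metricFunction (M Q r : ℝ) : ℝ := 1 - 2 * M / r + Q ^ 2 / r ^ 2

/-- The spherically symmetric part `V = r⁻¹ F F'` of the potential, with `F'` written out. -/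
noncomputable def radialPotential (M Q r : ℝ) : ℝ :=
  r⁻¹ * metricFunction M Q r * (2 * M / r ^ 2 - 2 * Q ^ 2 / r ^ 3)

/-- The angular potential `V_L = F / r²`. -/
noncomputable def angularPotential (M Q r : ℝ) : ℝ := metricFunction M Q r / r ^ 2

/-- The effective potential `V_c = V + c V_L`; the `l`-th spherical harmonic has
`c = l (l + 1)`. -/
noncomputable def effectivePotential (M Q c r : ℝ) : ℝ :=
  radialPotential M Q r + c * angularPotential M Q r

/-- The radius `r₊` of the event horizon; it is the larger root of `F` only when `Q² ≤ M²`, since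
`√` vanishes on negative numbers. -/
noncomputable def horizonRadius (M Q : ℝ) : ℝ := M + √(M ^ 2 - Q ^ 2)

section CriticalPolynomial

open Polynomial

/-- The cubic `P_Q` that governs the sign of `dV/dr`. -/
noncomputable def radialPolynomial (M Q : ℝ) : ℝ[X] :=
  C (3 * M) * X ^ 3 - C (4 * (Q ^ 2 + 2 * M ^ 2)) * X ^ 2 + C (15 * M * Q ^ 2) * X - C (6 * Q ^ 4)

/-- The quartic `P_L` that governs the sign of `dV_L/dr`. -/
noncomputable def angularPolynomial (M Q : ℝ) : ℝ[X] :=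
  X ^ 4 - C (3 * M) * X ^ 3 + C (2 * Q ^ 2) * X ^ 2

/-- The polynomial `P_Q + c P_L`, whose positive roots are the critical points of `V_c`. -/
noncomputable def criticalPolynomial (M Q c : ℝ) : ℝ[X] :=
  radialPolynomial M Q + C c * angularPolynomial M Q

theorem eval_radialPolynomial (M Q r : ℝ) : (radialPolynomial M Q).eval r =
    3 * M * r ^ 3 - 4 * (Q ^ 2 + 2 * M ^ 2) * r ^ 2 + 15 * M * Q ^ 2 * r - 6 * Q ^ 4 := by
  simp [radialPolynomial]

theorem eval_angularPolynomial (M Q r : ℝ) :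
    (angularPolynomial M Q).eval r = r ^ 4 - 3 * M * r ^ 3 + 2 * Q ^ 2 * r ^ 2 := by
  simp [angularPolynomial]

theorem eval_criticalPolynomial (M Q c r : ℝ) : (criticalPolynomial M Q c).eval r =
    (radialPolynomial M Q).eval r + c * (angularPolynomial M Q).eval r := by
  simp [criticalPolynomial]

theorem taylor_criticalPolynomial (hs : Q ^ 2 = M ^ 2 - s ^ 2) :
    taylor (M + s) (criticalPolynomial M Q c) =
      C (-(s * (M + s) ^ 2 * (2 * s + c * (M + s)))) +
      C ((M + s) * (2 * s * (4 * s - 3 * M) - c * M * (M + s))) * X +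
      C (4 * s ^ 2 + 9 * M * s - 3 * M ^ 2 + c * (M + s) * (4 * s - M)) * X ^ 2 +
      C (3 * M + c * (4 * s + M)) * X ^ 3 +
      C c * X ^ 4 := by
  have hs' : Q ^ 4 = (M ^ 2 - s ^ 2) ^ 2 := by rw [← hs]; ring
  refine Polynomial.funext fun x ↦ ?_
  simp only [taylor_eval, eval_criticalPolynomial, eval_radialPolynomial, eval_angularPolynomial,
    hs, hs', eval_add, eval_mul, eval_pow, eval_C, eval_X]
  ring

theorem hasOneSignChange_taylor_criticalPolynomial (hM : 0 < M) (hc : 0 ≤ c) (hs₀ : 0 ≤ s)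
    (hs : Q ^ 2 = M ^ 2 - s ^ 2) :
    HasOneSignChange (taylor (M + s) (criticalPolynomial M Q c)) := by
  rw [taylor_criticalPolynomial hs]
  refine hasOneSignChange_quartic (neg_nonpos.2 (by positivity)) ?_ (by positivity) hc ?_
  · rcases le_total (4 * s) (3 * M) with h | h
    · left
      have h_radial : 2 * s * (4 * s - 3 * M) ≤ 0 :=
        mul_nonpos_of_nonneg_of_nonpos (by positivity) (sub_nonpos.2 h)
      have h_angular : 0 ≤ c * M * (M + s) := by positivity
      exact mul_nonpos_of_nonneg_of_nonpos (by positivity) (by linarith)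
    · right
      have h_radial : 0 ≤ 4 * s ^ 2 + 9 * M * s - 3 * M ^ 2 := by nlinarith
      have h_angular : 0 ≤ c * (M + s) * (4 * s - M) := mul_nonneg (by positivity) (by linarith)
      linarith
  · -- In the extremal case `s = 0` the constant coefficient vanishes.
    rcases hs₀.eq_or_lt with rfl | hs_pos
    · right; right
      have h_angular : 0 ≤ c * M ^ 2 := by positivity
      nlinarith
    · left
      exact neg_neg_of_pos (by positivity)

theorem exists_criticalPolynomial_root (hM : 0 < M) (hQ : Q ^ 2 ≤ M ^ 2) (hc : 0 ≤ c) :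
    ∃ r₀ > horizonRadius M Q, (criticalPolynomial M Q c).eval r₀ = 0 ∧
      (∀ r ∈ Ioo (horizonRadius M Q) r₀, (criticalPolynomial M Q c).eval r < 0) ∧
      ∀ r > r₀, 0 < (criticalPolynomial M Q c).eval r := by
  have hs : Q ^ 2 = M ^ 2 - √(M ^ 2 - Q ^ 2) ^ 2 := by
    rw [Real.sq_sqrt (sub_nonneg.2 hQ), sub_sub_cancel]
  have eval_taylor (r : ℝ) : (taylor (horizonRadius M Q) (criticalPolynomial M Q c)).eval
      (r - horizonRadius M Q) = (criticalPolynomial M Q c).eval r := by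
    rw [taylor_eval, sub_add_cancel]
  obtain ⟨x₀, hx₀, hroot, hneg, hpos⟩ :=
    (hasOneSignChange_taylor_criticalPolynomial hM hc
      (Real.sqrt_nonneg _) hs).exists_pos_root_eval_neg_eval_pos
  refine ⟨x₀ + horizonRadius M Q, lt_add_of_pos_left _ hx₀, ?_, fun r hr ↦ ?_, fun r hr ↦ ?_⟩
  · rwa [← taylor_eval]
  · rw [← eval_taylor]
    exact hneg _ ⟨sub_pos.2 hr.1, sub_lt_iff_lt_add.2 hr.2⟩
  · rw [← eval_taylor]
    exact hpos _ (lt_sub_iff_add_lt.2 hr)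

end CriticalPolynomial

theorem hasDerivAt_metricFunction (hr : r ≠ 0) :
    HasDerivAt (metricFunction M Q) (2 * M / r ^ 2 - 2 * Q ^ 2 / r ^ 3) r := by
  have h := (((hasDerivAt_id r).fun_inv hr).const_mul (2 * M)).const_sub 1 |>.fun_add
    (((hasDerivAt_pow 2 r).fun_inv (pow_ne_zero 2 hr)).const_mul (Q ^ 2))
  refine h.congr_deriv ?_
  simp only [id, Nat.cast_ofNat]
  field_simp
  ring

theorem hasDerivAt_radialPotential (hr : r ≠ 0) :
    HasDerivAt (radialPotential M Q) (-2 / r ^ 7 * (radialPolynomial M Q).eval r) r := by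
  have hF' := (((hasDerivAt_pow 2 r).fun_inv (pow_ne_zero 2 hr)).const_mul (2 * M)).fun_sub
    (((hasDerivAt_pow 3 r).fun_inv (pow_ne_zero 3 hr)).const_mul (2 * Q ^ 2))
  have h := ((hasDerivAt_inv hr).fun_mul (hasDerivAt_metricFunction (M := M) (Q := Q) hr)).fun_mul
    hF'
  refine h.congr_deriv ?_
  simp only [metricFunction, eval_radialPolynomial, Nat.cast_ofNat]
  field_simp
  ring

theorem hasDerivAt_angularPotential (hr : r ≠ 0) :
    HasDerivAt (angularPotential M Q) (-2 / r ^ 7 * (angularPolynomial M Q).eval r) r := by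
  refine ((hasDerivAt_metricFunction hr).fun_div (hasDerivAt_pow 2 r)
    (pow_ne_zero 2 hr)).congr_deriv ?_
  simp only [metricFunction, eval_angularPolynomial, Nat.cast_ofNat]
  field_simp
  ring

theorem hasDerivAt_effectivePotential (hr : r ≠ 0) :
    HasDerivAt (effectivePotential M Q c) (-2 / r ^ 7 * (criticalPolynomial M Q c).eval r) r := by
  refine ((hasDerivAt_radialPotential hr).fun_add
    ((hasDerivAt_angularPotential hr).const_mul c)).congr_deriv ?_
  rw [eval_criticalPolynomial]
  ring

theorem sign_deriv_effectivePotential (hr : 0 < r) :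
    SignType.sign (deriv (effectivePotential M Q c) r) =
      -SignType.sign ((criticalPolynomial M Q c).eval r) := by
  have hneg : -2 / r ^ 7 < 0 := div_neg_of_neg_of_pos (by norm_num) (pow_pos hr 7)
  rw [(hasDerivAt_effectivePotential hr.ne').deriv, sign_mul, sign_neg hneg, neg_one_mul]

theorem horizonRadius_pos (hM : 0 < M) : 0 < horizonRadius M Q :=
  add_pos_of_pos_of_nonneg hM (Real.sqrt_nonneg _)

end ReissnerNordstrom

open ReissnerNordstrom in
theorem stmt15_general (M Q c : ℝ) (hM : 0 < M) (hQ : Q ^ 2 ≤ M ^ 2) (hc : 0 ≤ c) :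
    ∃ r₀ ∈ Ioi (horizonRadius M Q),
      deriv (effectivePotential M Q c) r₀ = 0 ∧
      (∀ r ∈ Ioi (horizonRadius M Q), deriv (effectivePotential M Q c) r = 0 → r = r₀) ∧
      StrictMonoOn (effectivePotential M Q c) (Ioc (horizonRadius M Q) r₀) ∧
      StrictAntiOn (effectivePotential M Q c) (Ici r₀) := by
  obtain ⟨r₀, hr₀, hroot, hneg, hpos⟩ := exists_criticalPolynomial_root hM hQ hc
  have pos_of_gt {r : ℝ} (hr : horizonRadius M Q < r) : 0 < r := (horizonRadius_pos hM).trans hr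
  have continuousOn {S : Set ℝ} (hS : S ⊆ Ioi (horizonRadius M Q)) :
      ContinuousOn (effectivePotential M Q c) S := fun r hr ↦
    (hasDerivAt_effectivePotential (pos_of_gt (hS hr)).ne').continuousAt.continuousWithinAt
  have deriv_pos : ∀ r ∈ Ioo (horizonRadius M Q) r₀, 0 < deriv (effectivePotential M Q c) r :=
    fun r hr ↦ sign_eq_one_iff.1 <| by
      rw [sign_deriv_effectivePotential (pos_of_gt hr.1), sign_neg (hneg r hr), neg_neg]
  have deriv_neg : ∀ r > r₀, deriv (effectivePotential M Q c) r < 0 :=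
    fun r hr ↦ sign_eq_neg_one_iff.1 <| by
      rw [sign_deriv_effectivePotential (pos_of_gt (hr₀.trans hr)), sign_pos (hpos r hr)]
  refine ⟨r₀, hr₀, ?_, fun r hr hderiv ↦ ?_, ?_, ?_⟩
  · rw [(hasDerivAt_effectivePotential (pos_of_gt hr₀).ne').deriv, hroot, mul_zero]
  · rcases lt_trichotomy r r₀ with h | h | h
    exacts [absurd hderiv (deriv_pos r ⟨hr, h⟩).ne', h, absurd hderiv (deriv_neg r h).ne]
  · refine strictMonoOn_of_deriv_pos (convex_Ioc _ _) (continuousOn fun r hr ↦ hr.1) ?_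
    rwa [interior_Ioc]
  · refine strictAntiOn_of_deriv_neg (convex_Ici _)
      (continuousOn fun r hr ↦ hr₀.trans_le (mem_Ici.1 hr)) ?_
    rwa [interior_Ici]

/-- Subcritical Reissner–Nordström, effective potential `V_c = V + c·V_L`, `c ≥ 0`:
`V_c` has a unique critical point `r₀` in the exterior region `(r₊, ∞)`, which is a
maximum: `V_c` is strictly increasing on `(r₊, r₀]` and strictly decreasing on `[r₀, ∞)`. -/
theorem stmt15 (M Q c : ℝ) (hM : 0 < M) (hQ : Q^2 < M^2) (hc : 0 ≤ c)
    (rp : ℝ) (hrp : rp = M + Real.sqrt (M^2 - Q^2))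
    (F V VL Vc : ℝ → ℝ)
    (hF : ∀ r, F r = 1 - 2*M/r + Q^2/r^2)
    (hV : ∀ r, V r = r⁻¹ * F r * (2*M/r^2 - 2*Q^2/r^3))
    (hVL : ∀ r, VL r = F r / r^2)
    (hVc : ∀ r, Vc r = V r + c * VL r) :
    ∃ r₀ ∈ Set.Ioi rp,
      deriv Vc r₀ = 0 ∧
      (∀ r ∈ Set.Ioi rp, deriv Vc r = 0 → r = r₀) ∧
      StrictMonoOn Vc (Set.Ioc rp r₀) ∧
      StrictAntiOn Vc (Set.Ici r₀) := by
  obtain rfl : Vc = ReissnerNordstrom.effectivePotential M Q c := funext fun r ↦ by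
    rw [hVc, hV, hVL, hF]; rfl
  exact hrp ▸ stmt15_general M Q c hM hQ.le hc
end
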